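/- arXiv:1409.6082 — 2 statements merged into one kernel-verified Lean document; each statement's English description precedes it below -/
import Mathlib

section
/- Let a < b, let α ∈ (0,1), let ψ : [a,b] → ℂ be α-Hölder continuous, and define r⁺(λ) := p.v.∫_a^b ψ(t)/(t−λ) dt + iπψ(λ) for λ ∈ (a,b). Then for every η > 0 with a+η < b−η there is a constant C = C(a,b,α,η) > 0, independent of ψ, such that for all λ, λ' ∈ [a+η, b−η] one has |r⁺(λ) − r⁺(λ')| ≤ C ‖ψ‖_{C^{0,α}} |λ − λ'|^α. -/
open MeasureTheory Filter Set

/-- The sup norm of ψ over [a,b]. -/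
noncomputable def supNormIcc (a b : ℝ) (ψ : ℝ → ℂ) : ℝ :=
  ⨆ t : Set.Icc a b, ‖ψ (t : ℝ)‖

/-- The least α-Hölder constant of ψ on [a,b]. -/
noncomputable def holderSeminorm (a b α : ℝ) (ψ : ℝ → ℂ) : ℝ :=
  sInf {M : ℝ | 0 ≤ M ∧ ∀ t ∈ Set.Icc a b, ∀ t' ∈ Set.Icc a b,
    ‖ψ t - ψ t'‖ ≤ M * |t - t'| ^ α}

/-- The Hölder norm ‖ψ‖_{C^{0,α}([a,b])} = sup norm + least Hölder constant. -/
noncomputable def holderNorm (a b α : ℝ) (ψ : ℝ → ℂ) : ℝ :=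
  supNormIcc a b ψ + holderSeminorm a b α ψ

/-!
Subtracting the singularity gives
`p.v. ∫_a^b ψ t / (t - x) dt = ∫_a^b (ψ t - ψ x) / (t - x) dt + log ((b - x) / (x - a)) ψ x`,
an integral that converges absolutely plus an explicit term. Let `h = |x - y|` be at most half the
distance `η` to the endpoints, and cut `[a, b]` at the ball of radius `2 h` around `x`. Inside, both
difference quotients are `O(|t - z| ^ (α - 1))` with `z = x, y`, and integrate to `O(h ^ α)`.
Outside, their difference is `(x - y) / (t - x)` times the quotient at `y`, which is
`O(h |t - x| ^ (α - 2))` and integrates to `O(h ^ α)` because `α < 1`, plus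
`(ψ y - ψ x) / (t - x)`, whose integral is explicit and turns the difference of the two logarithmic
terms into `(log ((b - x) / (x - a)) - log ((b - y) / (y - a))) ψ y`. Walking from `x` to `y` in a
number of steps depending only on `(b - a) / η` removes the restriction on `h`.
-/

open scoped NNReal Topology

section Holder

lemma holderOnWith_iff_dist_le {X Y : Type*} [PseudoMetricSpace X] [PseudoMetricSpace Y]
    {C r : ℝ≥0} {f : X → Y} {s : Set X} :
    HolderOnWith C r f s ↔
      ∀ x ∈ s, ∀ y ∈ s, dist (f x) (f y) ≤ C * dist x y ^ (r : ℝ) := by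
  refine ⟨fun hf x hx y hy => hf.dist_le hx hy, fun h x hx y hy => ?_⟩
  rw [edist_nndist, edist_nndist, ← ENNReal.coe_rpow_of_nonneg _ r.coe_nonneg, ← ENNReal.coe_mul,
    ENNReal.coe_le_coe]
  exact_mod_cast h x hx y hy

lemma dist_le_mul_of_convex_of_forall_dist_le {E Y : Type*} [NormedAddCommGroup E] [NormedSpace ℝ E]
    [PseudoMetricSpace Y] {f : E → Y} {s : Set E} {ω : ℝ → ℝ} {ρ : ℝ} (hs : Convex ℝ s)
    (hf : ∀ x ∈ s, ∀ y ∈ s, dist x y ≤ ρ → dist (f x) (f y) ≤ ω (dist x y))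
    {x y : E} (hx : x ∈ s) (hy : y ∈ s) {n : ℕ} (hn : n ≠ 0) (hxy : dist x y ≤ n * ρ) :
    dist (f x) (f y) ≤ n * ω (dist x y / n) := by
  have hn' : (0 : ℝ) < n := by positivity
  set z : ℕ → E := fun k => AffineMap.lineMap x y (k / n : ℝ) with hz
  have hzs : ∀ k ≤ n, z k ∈ s := fun k hk => by
    refine hs.lineMap_mem hx hy ⟨by positivity, ?_⟩
    rw [div_le_one hn']
    exact_mod_cast hk
  have hdist : ∀ k, dist (z k) (z (k + 1)) = dist x y / n := fun k => by
    rw [hz, dist_lineMap_lineMap, Real.dist_eq, ← sub_div]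
    push_cast
    rw [sub_add_cancel_left, abs_div, abs_neg, abs_one, abs_of_pos hn']
    ring
  have hchain : dist (f (z 0)) (f (z n)) ≤ ∑ _k ∈ Finset.range n, ω (dist x y / n) :=
    dist_le_range_sum_of_dist_le (f := f ∘ z) n fun {k} hk => by
      rw [← hdist k]
      refine hf _ (hzs k hk.le) _ (hzs (k + 1) hk) ?_
      rwa [hdist, div_le_iff₀' hn']
  simpa [hz, div_self hn'.ne'] using hchain

end Holder

section Radial

variable {E : Type*} [NormedAddCommGroup E] {s T : Set ℝ} {φ : ℝ → ℝ}
  {x p r H : ℝ} {f : ℝ → E}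

lemma integrable_comp_abs_sub {F : Type*} [NormedAddCommGroup F] [NormedSpace ℝ F] {φ : ℝ → F}
    (hφ : IntegrableOn φ (Ioi 0)) (x : ℝ) : Integrable fun t => φ |t - x| :=
  ((integrable_fun_norm_addHaar (volume : Measure ℝ)).2 (by simpa using hφ)).comp_sub_right x

lemma integrable_indicator_comp_abs_sub (hT : MeasurableSet T) (hφ : IntegrableOn φ (Ioi 0 ∩ T))
    (x : ℝ) : Integrable fun t => T.indicator φ |t - x| :=
  integrable_comp_abs_sub ((integrableOn_indicator_iff hT).2 (by rwa [inter_comm])) x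

lemma integrableOn_comp_abs_sub (hs : MeasurableSet s) (hT : MeasurableSet T)
    (hφ : IntegrableOn φ (Ioi 0 ∩ T)) (hsT : ∀ t ∈ s, |t - x| ∈ T) :
    IntegrableOn (fun t => φ |t - x|) s :=
  (integrable_indicator_comp_abs_sub hT hφ x).integrableOn.congr_fun
    (fun t ht => indicator_of_mem (hsT t ht) φ) hs

lemma norm_setIntegral_le_two_mul_setIntegral_of_norm_le_comp_abs_sub [NormedSpace ℝ E]
    (hs : MeasurableSet s) (hT : MeasurableSet T) (hφ : IntegrableOn φ (Ioi 0 ∩ T))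
    (hφ₀ : ∀ u ∈ T, 0 ≤ φ u) (hsT : ∀ t ∈ s, |t - x| ∈ T) (hf : ∀ t ∈ s, ‖f t‖ ≤ φ |t - x|) :
    ‖∫ t in s, f t‖ ≤ 2 * ∫ u in Ioi 0 ∩ T, φ u := by
  have hint := integrable_indicator_comp_abs_sub hT hφ x
  calc ‖∫ t in s, f t‖ ≤ ∫ t in s, T.indicator φ |t - x| :=
        norm_integral_le_of_norm_le hint.integrableOn <| (ae_restrict_iff' hs).2 <|
          .of_forall fun t ht => by simpa only [indicator_of_mem (hsT t ht)] using hf t ht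
    _ ≤ ∫ t, T.indicator φ |t - x| :=
        setIntegral_le_integral hint (.of_forall fun t => indicator_nonneg hφ₀ _)
    _ = ∫ t, T.indicator φ |t| := integral_sub_right_eq_self (fun t => T.indicator φ |t|) x
    _ = 2 * ∫ u in Ioi 0 ∩ T, φ u := by rw [integral_comp_abs, setIntegral_indicator hT]

lemma Ioi_inter_Icc_self {ι : Type*} [LinearOrder ι] (a b : ι) : Ioi a ∩ Icc a b = Ioc a b := by
  grind

lemma integrableOn_Ioc_zero_rpow (hp : -1 < p) (r : ℝ) :
    IntegrableOn (fun u : ℝ => u ^ p) (Ioc 0 r) :=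
  (intervalIntegral.intervalIntegrable_rpow' hp).1

lemma integrableOn_abs_sub_rpow (hp : -1 < p) (hs : MeasurableSet s)
    (hsr : ∀ t ∈ s, |t - x| ≤ r) : IntegrableOn (fun t => |t - x| ^ p) s :=
  integrableOn_comp_abs_sub (φ := (· ^ p)) hs measurableSet_Icc
    (by rw [Ioi_inter_Icc_self]; exact integrableOn_Ioc_zero_rpow hp r)
    fun t ht => ⟨abs_nonneg _, hsr t ht⟩

lemma norm_setIntegral_le_of_norm_le_rpow_of_abs_sub_le [NormedSpace ℝ E] (hp : -1 < p)
    (hH : 0 ≤ H) (hr : 0 ≤ r) (hs : MeasurableSet s) (hsr : ∀ t ∈ s, |t - x| ≤ r)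
    (hf : ∀ t ∈ s, ‖f t‖ ≤ H * |t - x| ^ p) :
    ‖∫ t in s, f t‖ ≤ 2 * (H * (r ^ (p + 1) / (p + 1))) := by
  refine (norm_setIntegral_le_two_mul_setIntegral_of_norm_le_comp_abs_sub
    (T := Icc 0 r) (φ := fun u => H * u ^ p) hs measurableSet_Icc ?_
    (fun u hu => mul_nonneg hH (Real.rpow_nonneg hu.1 p))
    (fun t ht => ⟨abs_nonneg _, hsr t ht⟩) hf).trans_eq ?_
  · rw [Ioi_inter_Icc_self]
    exact (integrableOn_Ioc_zero_rpow hp r).const_mul H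
  · rw [Ioi_inter_Icc_self, integral_const_mul, ← intervalIntegral.integral_of_le hr,
      integral_rpow (.inl hp), Real.zero_rpow (by linarith), sub_zero]

lemma norm_setIntegral_le_of_norm_le_rpow_of_le_abs_sub [NormedSpace ℝ E] (hp : p < -1)
    (hH : 0 ≤ H) (hr : 0 < r) (hs : MeasurableSet s) (hsr : ∀ t ∈ s, r ≤ |t - x|)
    (hf : ∀ t ∈ s, ‖f t‖ ≤ H * |t - x| ^ p) :
    ‖∫ t in s, f t‖ ≤ 2 * (H * (-r ^ (p + 1) / (p + 1))) := by
  have hT : Ioi 0 ∩ Ici r = Ici r := inter_eq_right.2 (Ici_subset_Ioi.2 hr)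
  refine (norm_setIntegral_le_two_mul_setIntegral_of_norm_le_comp_abs_sub
    (T := Ici r) (φ := fun u => H * u ^ p) hs measurableSet_Ici ?_
    (fun u hu => mul_nonneg hH (Real.rpow_nonneg (hr.le.trans hu) p))
    hsr hf).trans_eq ?_
  · rw [hT, integrableOn_Ici_iff_integrableOn_Ioi]
    exact (integrableOn_Ioi_rpow_of_lt hp hr).const_mul H
  · rw [hT, integral_Ici_eq_integral_Ioi, integral_const_mul, integral_Ioi_rpow_of_lt hp hr]

end Radial

section Slope

lemma slope_sub_slope_of_ne {k E : Type*} [Field k] [AddCommGroup E] [Module k E] (ψ : k → E)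
    {x t : k} (htx : t ≠ x) (y : k) :
    slope ψ x t - slope ψ y t =
      ((x - y) / (t - x)) • slope ψ y t + (t - x)⁻¹ • (ψ y - ψ x) := by
  have hψ : ψ t - ψ x = (t - y) • slope ψ y t + (ψ y - ψ x) := by
    rw [sub_smul_slope, vsub_eq_sub, sub_add_sub_cancel]
  have hcoeff : (t - x)⁻¹ * (t - y) - 1 = (x - y) / (t - x) := by
    field_simp [sub_ne_zero.2 htx]
    ring
  rw [slope_def_module ψ x t, hψ, smul_add, smul_smul, add_sub_right_comm, ← hcoeff, sub_smul,
    one_smul]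

variable {E : Type*} [NormedAddCommGroup E] [NormedSpace ℝ E] {ψ : ℝ → E} {H α : ℝ≥0}
  {s u : Set ℝ} {x y t r h : ℝ}

lemma norm_slope_le_of_holderOnWith (hψ : HolderOnWith H α ψ s) (hx : x ∈ s) (ht : t ∈ s) :
    ‖slope ψ x t‖ ≤ H * |t - x| ^ (α - 1 : ℝ) := by
  rcases eq_or_ne t x with rfl | htx
  · rw [slope_same, norm_zero]
    positivity
  have hpos : |t - x| ≠ 0 := abs_ne_zero.2 (sub_ne_zero.2 htx)
  calc ‖slope ψ x t‖ = dist (ψ t) (ψ x) / |t - x| := by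
        rw [slope_def_module, norm_smul, norm_inv, Real.norm_eq_abs, dist_eq_norm, inv_mul_eq_div]
    _ ≤ H * |t - x| ^ (α : ℝ) / |t - x| := by
        gcongr
        exact hψ.dist_le ht hx
    _ = H * |t - x| ^ (α - 1 : ℝ) := by rw [Real.rpow_sub_one hpos, mul_div_assoc]

lemma integrableOn_slope_of_holderOnWith (hα : 0 < α) (hψ : HolderOnWith H α ψ s) (hx : x ∈ s)
    (hs : MeasurableSet s) (hsr : ∀ t ∈ s, |t - x| ≤ r) : IntegrableOn (slope ψ x) s := by
  have hmajorant : IntegrableOn (fun t => |t - x| ^ (α - 1 : ℝ)) s :=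
    integrableOn_abs_sub_rpow (by linarith [NNReal.coe_pos.2 hα]) hs hsr
  refine (hmajorant.const_mul (H : ℝ)).mono' ?_ ?_
  · have hinv : AEStronglyMeasurable (fun t : ℝ => (t - x)⁻¹) (volume.restrict s) :=
      (Measurable.inv (by fun_prop)).aestronglyMeasurable
    exact hinv.smul
      (((hψ.continuousOn hα).sub continuousOn_const).aestronglyMeasurable hs)
  · exact (ae_restrict_iff' hs).2 (.of_forall fun t ht => norm_slope_le_of_holderOnWith hψ hx ht)

lemma norm_setIntegral_slope_le_of_holderOnWith (hα : 0 < α) (hψ : HolderOnWith H α ψ s)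
    (hx : x ∈ s) (hu : MeasurableSet u) (hus : u ⊆ s) (hr : 0 ≤ r) (hur : ∀ t ∈ u, |t - x| ≤ r) :
    ‖∫ t in u, slope ψ x t‖ ≤ 2 * (H * (r ^ (α : ℝ) / α)) := by
  have hbound := norm_setIntegral_le_of_norm_le_rpow_of_abs_sub_le (p := α - 1)
    (by linarith [NNReal.coe_pos.2 hα]) H.coe_nonneg hr hu hur
    fun t ht => norm_slope_le_of_holderOnWith hψ hx (hus ht)
  rwa [sub_add_cancel] at hbound

lemma norm_div_smul_slope_le_of_holderOnWith (hα : α ≤ 1) (hψ : HolderOnWith H α ψ s)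
    (hy : y ∈ s) (ht : t ∈ s) (hh : 0 < h) (hxy : |x - y| ≤ h) (htx : 2 * h ≤ |t - x|) :
    ‖((x - y) / (t - x)) • slope ψ y t‖ ≤
      H * h * 2 ^ (1 - α : ℝ) * |t - x| ^ (α - 2 : ℝ) := by
  have hpos : 0 < |t - x| := by linarith
  have hhalf : |t - x| / 2 ≤ |t - y| := by
    have := abs_sub_le t y x
    rw [abs_sub_comm y x] at this
    linarith
  calc ‖((x - y) / (t - x)) • slope ψ y t‖ = |x - y| / |t - x| * ‖slope ψ y t‖ := by
        rw [norm_smul, norm_div, Real.norm_eq_abs, Real.norm_eq_abs]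
    _ ≤ h / |t - x| * (H * (|t - x| / 2) ^ (α - 1 : ℝ)) := by
        gcongr
        refine (norm_slope_le_of_holderOnWith hψ hy ht).trans ?_
        gcongr H * ?_
        exact Real.rpow_le_rpow_of_nonpos (by positivity) hhalf (sub_nonpos.2 (mod_cast hα))
    _ = H * h * 2 ^ (1 - α : ℝ) * |t - x| ^ (α - 2 : ℝ) := by
        rw [Real.div_rpow hpos.le zero_le_two, show (α - 2 : ℝ) = α - 1 - 1 by ring,
          Real.rpow_sub_one hpos.ne' (α - 1 : ℝ), ← neg_sub (α : ℝ) 1, Real.rpow_neg zero_le_two]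
        field_simp

lemma norm_setIntegral_div_smul_slope_le_of_holderOnWith (hα : α < 1) (hψ : HolderOnWith H α ψ s)
    (hy : y ∈ s) (hu : MeasurableSet u) (hus : u ⊆ s) (hh : 0 < h) (hxy : |x - y| ≤ h)
    (hux : ∀ t ∈ u, 2 * h ≤ |t - x|) :
    ‖∫ t in u, ((x - y) / (t - x)) • slope ψ y t‖ ≤ 2 * (H * (h ^ (α : ℝ) / (1 - α))) := by
  have hα' : (α : ℝ) < 1 := mod_cast hα
  refine (norm_setIntegral_le_of_norm_le_rpow_of_le_abs_sub (p := α - 2)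
    (H := H * h * 2 ^ (1 - α : ℝ)) (by linarith) (by positivity)
    (by positivity : 0 < 2 * h) hu hux fun t ht =>
      norm_div_smul_slope_le_of_holderOnWith hα.le hψ hy (hus ht) hh hxy (hux t ht)).trans_eq ?_
  have hne : (1 - α : ℝ) ≠ 0 := by linarith
  rw [show (α - 2 + 1 : ℝ) = -(1 - α) by ring, Real.rpow_neg (by positivity),
    Real.mul_rpow zero_le_two hh.le, Real.rpow_one_sub' hh.le hne]
  field_simp

lemma integrableOn_slope_Icc_of_holderOnWith {a b : ℝ} (hα : 0 < α)
    (hψ : HolderOnWith H α ψ (Icc a b)) (hx : x ∈ Icc a b) :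
    IntegrableOn (slope ψ x) (Icc a b) :=
  integrableOn_slope_of_holderOnWith hα hψ hx measurableSet_Icc
    fun _ ht => abs_sub_le_of_le_of_le ht.1 ht.2 hx.1 hx.2

end Slope

section Kernel

variable {a b x δ : ℝ}

lemma Icc_sdiff_Ioo_eq_union (hδ : 0 < δ) (ha : a ≤ x - δ) (hb : x + δ ≤ b) :
    Icc a b \ Ioo (x - δ) (x + δ) = Icc a (x - δ) ∪ Icc (x + δ) b := by
  grind

lemma continuousOn_inv_sub {s : Set ℝ} (hx : x ∉ s) : ContinuousOn (fun t => (t - x)⁻¹) s :=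
  ContinuousOn.inv₀ (by fun_prop) fun _ ht h => hx (sub_eq_zero.1 h ▸ ht)

lemma integrableOn_inv_sub (hδ : 0 < δ) (ha : a ≤ x - δ) (hb : x + δ ≤ b) :
    IntegrableOn (fun t => (t - x)⁻¹) (Icc a b \ Ioo (x - δ) (x + δ)) := by
  rw [Icc_sdiff_Ioo_eq_union hδ ha hb]
  exact (continuousOn_inv_sub (by simp [hδ])).integrableOn_Icc.union
    (continuousOn_inv_sub (by simp [hδ])).integrableOn_Icc

/-- The principal value of `∫_a^b dt / (t - x)`, for `a < x < b`. -/
noncomputable def cauchyLog (a b x : ℝ) : ℝ := Real.log (b - x) - Real.log (x - a)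

lemma setIntegral_inv_sub (hδ : 0 < δ) (ha : a ≤ x - δ) (hb : x + δ ≤ b) :
    ∫ t in Icc a b \ Ioo (x - δ) (x + δ), (t - x)⁻¹ = cauchyLog a b x := by
  have hleft : ∫ t in Icc a (x - δ), (t - x)⁻¹ = Real.log δ - Real.log (x - a) := by
    rw [integral_Icc_eq_integral_Ioc, ← intervalIntegral.integral_of_le ha,
      intervalIntegral.integral_comp_sub_right (fun t => t⁻¹), sub_sub_cancel_left,
      integral_inv_of_neg (by linarith) (by linarith), ← neg_sub x a, neg_div_neg_eq,
      Real.log_div hδ.ne' (by linarith)]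
  have hright : ∫ t in Icc (x + δ) b, (t - x)⁻¹ = Real.log (b - x) - Real.log δ := by
    rw [integral_Icc_eq_integral_Ioc, ← intervalIntegral.integral_of_le hb,
      intervalIntegral.integral_comp_sub_right (fun t => t⁻¹), add_sub_cancel_left,
      integral_inv_of_pos hδ (by linarith), Real.log_div (by linarith) hδ.ne']
  have hdisj : Disjoint (Icc a (x - δ)) (Icc (x + δ) b) :=
    Set.disjoint_left.2 fun t ht ht' => by linarith [ht.2, ht'.1]
  rw [Icc_sdiff_Ioo_eq_union hδ ha hb, setIntegral_union hdisj measurableSet_Icc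
    (continuousOn_inv_sub (by simp [hδ])).integrableOn_Icc
    (continuousOn_inv_sub (by simp [hδ])).integrableOn_Icc, hleft, hright, cauchyLog]
  ring

lemma abs_log_sub_log_le_of_le {η u v : ℝ} (hη : 0 < η) (hu : η ≤ u) (hv : η ≤ v) :
    |Real.log u - Real.log v| ≤ |u - v| / η := by
  have hpos : ∀ w ∈ Ici η, 0 < w := fun w hw => hη.trans_le hw
  rw [div_eq_inv_mul]
  refine (convex_Ici η).norm_image_sub_le_of_norm_deriv_le (f := Real.log)
    (fun w hw => Real.differentiableAt_log (hpos w hw).ne') (fun w hw => ?_) hv hu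
  rw [Real.deriv_log, Real.norm_of_nonneg (inv_nonneg.2 (hpos w hw).le)]
  exact inv_anti₀ hη hw

lemma abs_cauchyLog_sub_cauchyLog_le {y η : ℝ} (hη : 0 < η) (hx : x ∈ Icc (a + η) (b - η))
    (hy : y ∈ Icc (a + η) (b - η)) :
    |cauchyLog a b x - cauchyLog a b y| ≤ 2 * (|x - y| / η) := by
  have hright := abs_log_sub_log_le_of_le hη (u := b - x) (v := b - y)
    (by linarith [hx.2]) (by linarith [hy.2])
  have hleft := abs_log_sub_log_le_of_le hη (u := x - a) (v := y - a)
    (by linarith [hx.1]) (by linarith [hy.1])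
  rw [sub_sub_sub_cancel_left, abs_sub_comm y x] at hright
  rw [sub_sub_sub_cancel_right] at hleft
  rw [cauchyLog, cauchyLog, sub_sub_sub_comm, two_mul]
  exact (abs_sub _ _).trans (add_le_add hright hleft)

lemma abs_cauchyLog_sub_cauchyLog_le_rpow {y η α : ℝ} (hα : α ≤ 1) (hη : 0 < η)
    (hx : x ∈ Icc (a + η) (b - η)) (hy : y ∈ Icc (a + η) (b - η))
    (hxy : |x - y| ≤ η) : |cauchyLog a b x - cauchyLog a b y| ≤ 2 * (|x - y| / η) ^ α := by
  refine (abs_cauchyLog_sub_cauchyLog_le hη hx hy).trans ?_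
  gcongr
  exact Real.self_le_rpow_of_le_one (by positivity) ((div_le_one hη).2 hxy) hα

end Kernel

section PrincipalValue

variable {E : Type*} [NormedAddCommGroup E] [NormedSpace ℝ E] {a b x y δ : ℝ} {ψ : ℝ → E} {R : E}

/-- The principal value `p.v. ∫_a^b ψ t / (t - x) dt` exists and equals `R`. -/
def HasCauchyPV (a b : ℝ) (ψ : ℝ → E) (x : ℝ) (R : E) : Prop :=
  Tendsto (fun δ : ℝ => ∫ t in Icc a b \ Ioo (x - δ) (x + δ), (t - x)⁻¹ • ψ t) (𝓝[>] 0) (𝓝 R)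

/-- The principal value `p.v. ∫_a^b ψ t / (t - x) dt` with the singularity subtracted: the integral
of the difference quotient `(ψ t - ψ x) / (t - x)` plus the explicit principal value for the
constant `ψ x`. -/
noncomputable def cauchyPV (a b : ℝ) (ψ : ℝ → E) (x : ℝ) : E :=
  (∫ t in Icc a b, slope ψ x t) + cauchyLog a b x • ψ x

lemma tendsto_setIntegral_sdiff_Ioo_nhdsGT_zero {f : ℝ → E} {s : Set ℝ} (hf : IntegrableOn f s)
    (x : ℝ) :
    Tendsto (fun δ => ∫ t in s \ Ioo (x - δ) (x + δ), f t) (𝓝[>] 0) (𝓝 (∫ t in s, f t)) := by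
  have hvolume : Tendsto (fun δ => volume (Ioo (x - δ) (x + δ))) (𝓝[>] 0) (𝓝 0) := by
    have hcont : Continuous fun δ => ENNReal.ofReal (x + δ - (x - δ)) :=
      ENNReal.continuous_ofReal.comp (by fun_prop)
    simpa using (hcont.tendsto 0).mono_left nhdsWithin_le_nhds
  have hball : Tendsto (fun δ => ∫ t in Ioo (x - δ) (x + δ), f t ∂volume.restrict s)
      (𝓝[>] 0) (𝓝 0) :=
    hf.integrable.tendsto_setIntegral_nhds_zero <|
      tendsto_of_tendsto_of_tendsto_of_le_of_le tendsto_const_nhds hvolume (fun _ => zero_le)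
        fun _ => Measure.restrict_apply_le _ _
  refine (sub_zero (∫ t in s, f t) ▸ tendsto_const_nhds.sub hball).congr fun δ => ?_
  rw [Measure.restrict_restrict measurableSet_Ioo, inter_comm,
    ← integral_inter_add_sdiff (measurableSet_Ioo (a := x - δ) (b := x + δ)) hf,
    add_sub_cancel_left]

variable [CompleteSpace E]

lemma setIntegral_inv_sub_smul (hψ : IntegrableOn (slope ψ x) (Icc a b)) (hδ : 0 < δ)
    (ha : a ≤ x - δ) (hb : x + δ ≤ b) :
    ∫ t in Icc a b \ Ioo (x - δ) (x + δ), (t - x)⁻¹ • ψ t =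
      (∫ t in Icc a b \ Ioo (x - δ) (x + δ), slope ψ x t) + cauchyLog a b x • ψ x := by
  rw [← setIntegral_inv_sub hδ ha hb, ← integral_smul_const,
    ← integral_add (hψ.mono_set sdiff_subset) ((integrableOn_inv_sub hδ ha hb).smul_const _)]
  simp only [slope_def_module, smul_sub, sub_add_cancel]

lemma hasCauchyPV_cauchyPV (hψ : IntegrableOn (slope ψ x) (Icc a b)) (hx : x ∈ Ioo a b) :
    HasCauchyPV a b ψ x (cauchyPV a b ψ x) := by
  refine ((tendsto_setIntegral_sdiff_Ioo_nhdsGT_zero hψ x).add_const _).congr' ?_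
  filter_upwards [Ioo_mem_nhdsGT (lt_min (sub_pos.2 hx.1) (sub_pos.2 hx.2))] with δ hδ
  obtain ⟨hδa, hδb⟩ := lt_min_iff.1 hδ.2
  exact (setIntegral_inv_sub_smul hψ hδ.1 (by linarith) (by linarith)).symm

lemma HasCauchyPV.eq_cauchyPV (hR : HasCauchyPV a b ψ x R)
    (hψ : IntegrableOn (slope ψ x) (Icc a b)) (hx : x ∈ Ioo a b) : R = cauchyPV a b ψ x :=
  tendsto_nhds_unique hR (hasCauchyPV_cauchyPV hψ hx)

lemma setIntegral_slope_sub_setIntegral_slope (hψx : IntegrableOn (slope ψ x) (Icc a b))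
    (hψy : IntegrableOn (slope ψ y) (Icc a b)) (hδ : 0 < δ) (ha : a ≤ x - δ) (hb : x + δ ≤ b) :
    (∫ t in Icc a b \ Ioo (x - δ) (x + δ), slope ψ x t)
        - ∫ t in Icc a b \ Ioo (x - δ) (x + δ), slope ψ y t =
      (∫ t in Icc a b \ Ioo (x - δ) (x + δ), ((x - y) / (t - x)) • slope ψ y t)
        + cauchyLog a b x • (ψ y - ψ x) := by
  have hkernel := (integrableOn_inv_sub hδ ha hb).smul_const (ψ y - ψ x)
  have hslope : IntegrableOn (fun t => slope ψ x t - slope ψ y t)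
      (Icc a b \ Ioo (x - δ) (x + δ)) := (hψx.sub hψy).mono_set sdiff_subset
  rw [← setIntegral_inv_sub hδ ha hb, ← integral_smul_const, ← sub_eq_iff_eq_add,
    ← integral_sub (hψx.mono_set sdiff_subset) (hψy.mono_set sdiff_subset),
    ← integral_sub hslope hkernel]
  refine setIntegral_congr_fun (measurableSet_Icc.diff measurableSet_Ioo) fun t ht => ?_
  have htx : t ≠ x := fun h => ht.2 (by simp [h, hδ])
  exact sub_eq_iff_eq_add.2 (slope_sub_slope_of_ne ψ htx y)

lemma cauchyPV_sub_cauchyPV (hψx : IntegrableOn (slope ψ x) (Icc a b))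
    (hψy : IntegrableOn (slope ψ y) (Icc a b)) (hδ : 0 < δ) (ha : a ≤ x - δ) (hb : x + δ ≤ b) :
    cauchyPV a b ψ x - cauchyPV a b ψ y =
      (∫ t in Ioo (x - δ) (x + δ), slope ψ x t) - (∫ t in Ioo (x - δ) (x + δ), slope ψ y t)
      + (∫ t in Icc a b \ Ioo (x - δ) (x + δ), ((x - y) / (t - x)) • slope ψ y t)
      + (cauchyLog a b x - cauchyLog a b y) • ψ y := by
  have hsub : Ioo (x - δ) (x + δ) ⊆ Icc a b := Ioo_subset_Icc_self.trans (Icc_subset_Icc ha hb)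
  have hfar := setIntegral_slope_sub_setIntegral_slope hψx hψy hδ ha hb
  rw [setIntegral_sdiff measurableSet_Ioo hψx hsub, setIntegral_sdiff measurableSet_Ioo hψy hsub,
    ← sub_eq_iff_eq_add] at hfar
  rw [cauchyPV, cauchyPV, ← hfar]
  module

end PrincipalValue

section Estimate

variable {E : Type*} [NormedAddCommGroup E] {a b η S x y : ℝ} {H α : ℝ≥0} {ψ : ℝ → E}

lemma norm_setIntegral_Ioo_slope_le_of_holderOnWith [NormedSpace ℝ E] {z h : ℝ} (hα : 0 < α)
    (hψ : HolderOnWith H α ψ (Icc a b)) (hz : z ∈ Icc a b) (hh : 0 ≤ h)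
    (hsub : Ioo (x - 2 * h) (x + 2 * h) ⊆ Icc a b) (hzx : |x - z| ≤ h) :
    ‖∫ t in Ioo (x - 2 * h) (x + 2 * h), slope ψ z t‖ ≤ 2 * (H * ((3 * h) ^ (α : ℝ) / α)) := by
  refine norm_setIntegral_slope_le_of_holderOnWith hα hψ hz measurableSet_Ioo hsub (by positivity)
    fun t ht => ?_
  have htx : |t - x| < 2 * h := abs_sub_lt_iff.2 ⟨by linarith [ht.2], by linarith [ht.1]⟩
  linarith [abs_sub_le t x z]

lemma norm_cauchyPV_sub_cauchyPV_le_of_abs_sub_le_half [NormedSpace ℝ E] [CompleteSpace E]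
    (hα₀ : 0 < α) (hα₁ : α < 1) (hη : 0 < η) (hψ : HolderOnWith H α ψ (Icc a b))
    (hS : ∀ t ∈ Icc a b, ‖ψ t‖ ≤ S) (hx : x ∈ Icc (a + η) (b - η)) (hy : y ∈ Icc (a + η) (b - η))
    (hxy : |x - y| ≤ η / 2) :
    ‖cauchyPV a b ψ x - cauchyPV a b ψ y‖ ≤
      (H * (4 * 3 ^ (α : ℝ) / α + 2 / (1 - α)) + S * (2 / η ^ (α : ℝ))) * |x - y| ^ (α : ℝ) := by
  rcases eq_or_ne x y with rfl | hne
  · simp [hα₀.ne']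
  set h := |x - y| with hh
  have hpos : 0 < h := abs_sub_pos.2 hne
  have hx' : x ∈ Icc a b := Icc_subset_Icc (by linarith) (by linarith) hx
  have hy' : y ∈ Icc a b := Icc_subset_Icc (by linarith) (by linarith) hy
  have ha : a ≤ x - 2 * h := by linarith [hx.1]
  have hb : x + 2 * h ≤ b := by linarith [hx.2]
  have hsub : Ioo (x - 2 * h) (x + 2 * h) ⊆ Icc a b :=
    Ioo_subset_Icc_self.trans (Icc_subset_Icc ha hb)
  have hnear_x := norm_setIntegral_Ioo_slope_le_of_holderOnWith hα₀ hψ hx' hpos.le hsub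
    (by simp [hpos.le])
  have hnear_y := norm_setIntegral_Ioo_slope_le_of_holderOnWith hα₀ hψ hy' hpos.le hsub hh.ge
  have hfar := norm_setIntegral_div_smul_slope_le_of_holderOnWith hα₁ hψ hy'
    (measurableSet_Icc.diff measurableSet_Ioo) (sdiff_subset (t := Ioo (x - 2 * h) (x + 2 * h)))
    hpos hh.ge fun t ht => by
      by_contra! htx
      obtain ⟨hlt, hgt⟩ := abs_sub_lt_iff.1 htx
      exact ht.2 ⟨by linarith, by linarith⟩
  have hlog : ‖(cauchyLog a b x - cauchyLog a b y) • ψ y‖ ≤ 2 * (h / η) ^ (α : ℝ) * S := by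
    rw [norm_smul, Real.norm_eq_abs]
    gcongr
    · exact abs_cauchyLog_sub_cauchyLog_le_rpow hα₁.le hη hx hy (by linarith)
    · exact hS y hy'
  rw [cauchyPV_sub_cauchyPV (integrableOn_slope_Icc_of_holderOnWith hα₀ hψ hx')
    (integrableOn_slope_Icc_of_holderOnWith hα₀ hψ hy') (by positivity) ha hb]
  refine (norm_add_le_of_le (norm_add_le_of_le (norm_sub_le_of_le hnear_x hnear_y) hfar)
    hlog).trans_eq ?_
  rw [Real.mul_rpow zero_le_three hpos.le, Real.div_rpow hpos.le hη.le]
  ring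

lemma norm_cauchyPV_sub_cauchyPV_le_of_abs_sub_le_mul [NormedSpace ℝ E] [CompleteSpace E]
    (hα₀ : 0 < α) (hα₁ : α < 1) (hη : 0 < η) (hψ : HolderOnWith H α ψ (Icc a b))
    (hS : ∀ t ∈ Icc a b, ‖ψ t‖ ≤ S) (hx : x ∈ Icc (a + η) (b - η)) (hy : y ∈ Icc (a + η) (b - η))
    {n : ℕ} (hn : n ≠ 0) (hxy : |x - y| ≤ n * (η / 2)) :
    ‖cauchyPV a b ψ x - cauchyPV a b ψ y‖ ≤
      n * ((H * (4 * 3 ^ (α : ℝ) / α + 2 / (1 - α)) + S * (2 / η ^ (α : ℝ))) *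
        (|x - y| / n) ^ (α : ℝ)) := by
  have hchain := dist_le_mul_of_convex_of_forall_dist_le (f := cauchyPV a b ψ)
    (ω := fun d => (H * (4 * 3 ^ (α : ℝ) / α + 2 / (1 - α)) + S * (2 / η ^ (α : ℝ))) *
      d ^ (α : ℝ)) (ρ := η / 2) (convex_Icc (a + η) (b - η)) (fun z hz w hw hzw => by
        rw [dist_eq_norm, Real.dist_eq]
        exact norm_cauchyPV_sub_cauchyPV_le_of_abs_sub_le_half hα₀ hα₁ hη hψ hS hz hw hzw)
    hx hy hn hxy
  rwa [dist_eq_norm, Real.dist_eq] at hchain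

lemma exists_norm_cauchyPV_sub_cauchyPV_le (E : Type*) [NormedAddCommGroup E] [NormedSpace ℝ E]
    [CompleteSpace E] (a b : ℝ) {α : ℝ≥0} {η : ℝ} (hα₀ : 0 < α) (hα₁ : α < 1) (hη : 0 < η) :
    ∃ C ≥ 0, ∀ (ψ : ℝ → E) (H : ℝ≥0) (S : ℝ), HolderOnWith H α ψ (Icc a b) →
      (∀ t ∈ Icc a b, ‖ψ t‖ ≤ S) →
      ∀ x ∈ Icc (a + η) (b - η), ∀ y ∈ Icc (a + η) (b - η),
        ‖cauchyPV a b ψ x - cauchyPV a b ψ y‖ ≤ C * (S + H) * |x - y| ^ (α : ℝ) := by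
  have hα₁' : 0 < (1 - α : ℝ) := sub_pos.2 (mod_cast hα₁)
  obtain ⟨n, hn⟩ := exists_nat_ge ((b - a) / (η / 2))
  set A : ℝ := 4 * 3 ^ (α : ℝ) / α + 2 / (1 - α)
  set B : ℝ := 2 / η ^ (α : ℝ)
  have hA : 0 ≤ A := by positivity
  have hB : 0 ≤ B := by positivity
  refine ⟨(n + 1 : ℕ) * (A + B), by positivity, fun ψ H S hψ hS x hx y hy => ?_⟩
  have hS₀ : 0 ≤ S :=
    (norm_nonneg _).trans (hS x (Icc_subset_Icc (by linarith) (by linarith) hx))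
  have hxy : |x - y| ≤ (n + 1 : ℕ) * (η / 2) := by
    have hlen : |x - y| ≤ b - a :=
      abs_sub_le_iff.2 ⟨by linarith [hx.2, hy.1], by linarith [hy.2, hx.1]⟩
    rw [div_le_iff₀ (by positivity)] at hn
    push_cast
    linarith
  calc ‖cauchyPV a b ψ x - cauchyPV a b ψ y‖
      ≤ (n + 1 : ℕ) * ((H * A + S * B) * (|x - y| / (n + 1 : ℕ)) ^ (α : ℝ)) :=
        norm_cauchyPV_sub_cauchyPV_le_of_abs_sub_le_mul hα₀ hα₁ hη hψ hS hx hy n.succ_ne_zero hxy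
    _ ≤ (n + 1 : ℕ) * ((A + B) * (S + H) * |x - y| ^ (α : ℝ)) := by
        gcongr
        · nlinarith [mul_nonneg hA hS₀, mul_nonneg hB H.coe_nonneg]
        · exact div_le_self (abs_nonneg _) (mod_cast n.succ_pos)
    _ = (n + 1 : ℕ) * (A + B) * (S + H) * |x - y| ^ (α : ℝ) := by ring

theorem rplus_holder_interior_general (E : Type*) [NormedAddCommGroup E] [NormedSpace ℂ E]
    [CompleteSpace E] (a b : ℝ) {α : ℝ≥0} {η : ℝ} (hα₀ : 0 < α) (hα₁ : α < 1) (hη : 0 < η) :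
    ∃ C > 0, ∀ (ψ : ℝ → E) (H : ℝ≥0) (S : ℝ), HolderOnWith H α ψ (Icc a b) →
      (∀ t ∈ Icc a b, ‖ψ t‖ ≤ S) →
      ∀ x ∈ Icc (a + η) (b - η), ∀ y ∈ Icc (a + η) (b - η), ∀ R R' : E,
      HasCauchyPV a b ψ x R → HasCauchyPV a b ψ y R' →
      ‖(R + (Real.pi * Complex.I : ℂ) • ψ x) - (R' + (Real.pi * Complex.I : ℂ) • ψ y)‖ ≤
        C * (S + H) * |x - y| ^ (α : ℝ) := by
  obtain ⟨C, hC, hPV⟩ := exists_norm_cauchyPV_sub_cauchyPV_le E a b hα₀ hα₁ hη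
  refine ⟨C + Real.pi, by positivity, fun ψ H S hψ hS x hx y hy R R' hR hR' => ?_⟩
  have hI : ∀ z ∈ Icc (a + η) (b - η), z ∈ Ioo a b :=
    fun z hz => ⟨by linarith [hz.1], by linarith [hz.2]⟩
  have hslope : ∀ z ∈ Icc (a + η) (b - η), IntegrableOn (slope ψ z) (Icc a b) :=
    fun z hz => integrableOn_slope_Icc_of_holderOnWith hα₀ hψ (Ioo_subset_Icc_self (hI z hz))
  have hx' := Ioo_subset_Icc_self (hI x hx)
  have hS₀ : 0 ≤ S := (norm_nonneg _).trans (hS x hx')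
  have hψxy : ‖(Real.pi * Complex.I : ℂ) • (ψ x - ψ y)‖ ≤
      Real.pi * ((S + H) * |x - y| ^ (α : ℝ)) := by
    rw [norm_smul, norm_mul, Complex.norm_I, mul_one, Complex.norm_of_nonneg Real.pi_pos.le,
      ← dist_eq_norm]
    gcongr
    refine (hψ.dist_le hx' (Ioo_subset_Icc_self (hI y hy))).trans ?_
    rw [Real.dist_eq]
    gcongr
    exact le_add_of_nonneg_left hS₀
  rw [hR.eq_cauchyPV (hslope x hx) (hI x hx), hR'.eq_cauchyPV (hslope y hy) (hI y hy),
    add_sub_add_comm, ← smul_sub]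
  refine (norm_add_le_of_le (hPV ψ H S hψ hS x hx y hy) hψxy).trans_eq ?_
  ring

end Estimate

section ComplexValued

variable {a b : ℝ} {ψ : ℝ → ℂ}

lemma holderSeminorm_nonneg (a b α : ℝ) (ψ : ℝ → ℂ) : 0 ≤ holderSeminorm a b α ψ :=
  Real.sInf_nonneg fun _ hM => hM.1

lemma holderOnWith_holderSeminorm {α : ℝ≥0}
    (hψ : ∃ M : ℝ, 0 ≤ M ∧ ∀ t ∈ Icc a b, ∀ t' ∈ Icc a b,
      ‖ψ t - ψ t'‖ ≤ M * |t - t'| ^ (α : ℝ)) :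
    HolderOnWith ⟨holderSeminorm a b α ψ, holderSeminorm_nonneg a b α ψ⟩ α ψ (Icc a b) := by
  refine holderOnWith_iff_dist_le.2 fun t ht t' ht' => ?_
  rw [dist_eq_norm, Real.dist_eq]
  rcases (by positivity : 0 ≤ |t - t'| ^ (α : ℝ)).eq_or_lt with hzero | hpos
  · obtain ⟨M, -, hM⟩ := hψ
    simpa [← hzero] using hM t ht t' ht'
  · exact (div_le_iff₀ hpos).1 <|
      le_csInf hψ fun M hM => (div_le_iff₀ hpos).2 (hM.2 t ht t' ht')

lemma norm_le_supNormIcc (hψ : ContinuousOn ψ (Icc a b)) :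
    ∀ t ∈ Icc a b, ‖ψ t‖ ≤ supNormIcc a b ψ := fun t ht =>
  le_ciSup (f := fun u : Icc a b => ‖ψ u‖)
    (by simpa only [image_eq_range] using isCompact_Icc.bddAbove_image hψ.norm) ⟨t, ht⟩

lemma hasCauchyPV_iff_tendsto_div {x : ℝ} {R : ℂ} :
    HasCauchyPV a b ψ x R ↔
      Tendsto (fun δ : ℝ => ∫ t in Icc a b \ Ioo (x - δ) (x + δ), ψ t / ((t : ℂ) - (x : ℂ)))
        (𝓝[>] 0) (𝓝 R) := by
  simp only [HasCauchyPV, Complex.real_smul, div_eq_inv_mul, Complex.ofReal_inv, Complex.ofReal_sub]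

end ComplexValued

/-- interior Hölder continuity of `r⁺(λ) = p.v.∫_a^b ψ(t)/(t-λ) dt + iπψ(λ)`,
with a constant independent of ψ. -/
theorem rplus_holder_interior (a b α η : ℝ) (hab : a < b) (hα : α ∈ Set.Ioo (0:ℝ) 1)
    (hη : 0 < η) (hηab : a + η < b - η) :
    ∃ C > 0, ∀ ψ : ℝ → ℂ,
      (∃ M : ℝ, 0 ≤ M ∧ ∀ t ∈ Set.Icc a b, ∀ t' ∈ Set.Icc a b,
        ‖ψ t - ψ t'‖ ≤ M * |t - t'| ^ α) →
      ∀ lam ∈ Set.Icc (a + η) (b - η), ∀ lam' ∈ Set.Icc (a + η) (b - η),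
      ∀ R R' : ℂ,
      Filter.Tendsto
        (fun δ : ℝ => ∫ t in Set.Icc a b \ Set.Ioo (lam - δ) (lam + δ),
          ψ t / ((t : ℂ) - (lam : ℂ)))
        (nhdsWithin 0 (Set.Ioi 0)) (nhds R) →
      Filter.Tendsto
        (fun δ : ℝ => ∫ t in Set.Icc a b \ Set.Ioo (lam' - δ) (lam' + δ),
          ψ t / ((t : ℂ) - (lam' : ℂ)))
        (nhdsWithin 0 (Set.Ioi 0)) (nhds R') →
      ‖(R + (Real.pi : ℂ) * Complex.I * ψ lam)
          - (R' + (Real.pi : ℂ) * Complex.I * ψ lam')‖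
        ≤ C * holderNorm a b α ψ * |lam - lam'| ^ α := by
  lift α to ℝ≥0 using hα.1.le
  obtain ⟨C, hC, hbound⟩ := rplus_holder_interior_general ℂ a b (mod_cast hα.1) (mod_cast hα.2) hη
  refine ⟨C, hC, fun ψ hψ lam hlam lam' hlam' R R' hR hR' => ?_⟩
  have hψ' := holderOnWith_holderSeminorm hψ
  exact hbound ψ _ _ hψ' (norm_le_supNormIcc (hψ'.continuousOn (mod_cast hα.1)))
    lam hlam lam' hlam' R R' (hasCauchyPV_iff_tendsto_div.2 hR) (hasCauchyPV_iff_tendsto_div.2 hR')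
end

section
/- Let E ∈ ℝ and let λ : ℝ → ℝ be continuously differentiable with λ'(k) < 0 for all k, λ(k) → +∞ as k → −∞, and λ(k) → E as k → +∞ (so λ is a decreasing C¹ diffeomorphism from ℝ onto (E,∞)). Let h ∈ L¹(ℝ), let ε₀ > 0, let α ∈ (0,1), and assume that the function H : (E, E+ε₀] → ℂ defined by H(μ) := h(λ⁻¹(μ)) / |λ'(λ⁻¹(μ))| extends to an α-Hölder continuous function on [E, E+ε₀] with H(E) = 0. Then the function z ↦ r(z) := ∫_ℝ h(k)/(λ(k) − z) dk, defined and analytic on the open upper half-plane {Im z > 0}, admits a continuous extension r⁺ to the set S := {z ∈ ℂ : Im z ≥ 0, |z − E| ≤ ε₀/2}, and this extension is α-Hölder continuous on S: there exists C > 0 such that |r⁺(z) − r⁺(z')| ≤ C |z − z'|^α for all z, z' ∈ S. -/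
open MeasureTheory Filter Set
open scoped NNReal Topology

/-!
The derivative `r'(z) = ∫ h / (λ - z)²` blows up at most like `(Im z) ^ (α - 1)` all the way to the
threshold. Away from the threshold this is trivial. Near it, substituting `t = λ(k)` gives
`∫ φ(t) / (t - z)² dt` over `(E, b]`, and because `φ(E) = 0` the extension of `φ` by zero below `E`,
namely `t ↦ φ (max E t)`, is still `α`-Hölder on `(-∞, b]`. Subtracting its value at `Re z`, whose
contribution integrates explicitly to a multiple of `1 / (b - z)`, leaves an integrand dominated by
`|t - Re z| ^ α / |t - z|²`, and scaling by `Im z` yields the power.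

A function on a vertical strip of the upper half-plane with this bound on its derivative is
`α`-Hölder (Hardy–Littlewood): to compare its values at `z` and `w`, go up by `|z - w|`, across, and
down again. Hölder continuity then passes to the closed strip.
-/

section Holder

variable {X Y : Type*} [PseudoMetricSpace X] {C r : ℝ≥0} {s : Set X}

lemma holderOnWith_of_dist_le [PseudoMetricSpace Y] {f : X → Y}
    (h : ∀ x ∈ s, ∀ y ∈ s, dist (f x) (f y) ≤ C * dist x y ^ (r : ℝ)) :
    HolderOnWith C r f s := by
  intro x hx y hy
  rw [edist_nndist, edist_nndist, ← ENNReal.coe_rpow_of_nonneg _ r.coe_nonneg, ← ENNReal.coe_mul,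
    ENNReal.coe_le_coe, ← NNReal.coe_le_coe]
  simpa using h x hx y hy

lemma holderOnWith_closure_of_tendsto [PseudoMetricSpace Y] {f g : X → Y}
    (hf : HolderOnWith C r f s) (hg : ∀ x ∈ closure s, Tendsto f (𝓝[s] x) (𝓝 (g x))) :
    HolderOnWith C r g (closure s) := by
  refine holderOnWith_of_dist_le fun x hx y hy ↦ ?_
  have := mem_closure_iff_nhdsWithin_neBot.1 hx
  have := mem_closure_iff_nhdsWithin_neBot.1 hy
  have hxs : Tendsto Prod.fst (𝓝[s] x ×ˢ 𝓝[s] y) (𝓝[s] x) := tendsto_fst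
  have hys : Tendsto Prod.snd (𝓝[s] x ×ˢ 𝓝[s] y) (𝓝[s] y) := tendsto_snd
  have hdist : Tendsto (fun p : X × X ↦ C * dist p.1 p.2 ^ (r : ℝ)) (𝓝[s] x ×ˢ 𝓝[s] y)
      (𝓝 (C * dist x y ^ (r : ℝ))) :=
    (((hxs.mono_right nhdsWithin_le_nhds).dist (hys.mono_right nhdsWithin_le_nhds)).rpow_const
      (.inr r.coe_nonneg)).const_mul _
  refine le_of_tendsto_of_tendsto (((hg x hx).comp hxs).dist ((hg y hy).comp hys)) hdist ?_
  filter_upwards [prod_mem_prod self_mem_nhdsWithin self_mem_nhdsWithin] with p hp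
  exact hf.dist_le hp.1 hp.2

lemma exists_eqOn_holderOnWith_closure [MetricSpace Y] [CompleteSpace Y] {f : X → Y} (hr : 0 < r)
    (hf : HolderOnWith C r f s) :
    ∃ g : X → Y, EqOn g f (closure s \ s)ᶜ ∧ HolderOnWith C r g (closure s) := by
  classical
  have hlim : ∀ x ∈ closure s, Tendsto f (𝓝[s] x) (𝓝 (extendFrom s f x)) := by
    intro x hx
    have := mem_closure_iff_nhdsWithin_neBot.1 hx
    exact tendsto_extendFrom <| CompleteSpace.complete <|
      (cauchy_nhds.mono nhdsWithin_le_nhds).map_of_le (hf.uniformContinuousOn hr)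
        (le_principal_iff.2 self_mem_nhdsWithin)
  refine ⟨(closure s \ s).piecewise (extendFrom s f) f, piecewise_eqOn_compl _ _ _,
    holderOnWith_closure_of_tendsto hf fun x hx ↦ ?_⟩
  by_cases hxs : x ∈ s
  · rw [piecewise_eq_of_notMem _ _ _ fun h ↦ h.2 hxs]
    exact hf.continuousOn hr x hxs
  · rw [piecewise_eq_of_mem _ _ _ (mem_sdiff_of_mem hx hxs)]
    exact hlim x hx

lemma exists_pos_norm_sub_le_of_holderOnWith {V W : Type*} [SeminormedAddCommGroup V]
    [SeminormedAddCommGroup W] {f : V → W} {s : Set V} (hf : HolderOnWith C r f s) :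
    ∃ C' > (0 : ℝ), ∀ x ∈ s, ∀ y ∈ s, ‖f x - f y‖ ≤ C' * ‖x - y‖ ^ (r : ℝ) := by
  refine ⟨C + 1, by positivity, fun x hx y hy ↦ ?_⟩
  simp only [← dist_eq_norm]
  refine (hf.dist_le hx hy).trans ?_
  gcongr
  exact le_add_of_nonneg_right zero_le_one

end Holder

section HardyLittlewood

lemma norm_image_sub_le_of_norm_deriv_le_rpow {F : Type*} [NormedAddCommGroup F] [NormedSpace ℝ F]
    {g g' : ℝ → F} {C α a b : ℝ} (hα₀ : 0 < α) (hα₁ : α ≤ 1) (hC : 0 ≤ C) (ha : 0 < a)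
    (hab : a ≤ b) (hg : ∀ t ∈ Icc a b, HasDerivAt g (g' t) t)
    (hbound : ∀ t ∈ Icc a b, ‖g' t‖ ≤ C * t ^ (α - 1)) :
    ‖g b - g a‖ ≤ C / α * (b - a) ^ α := by
  have hprim : ∀ t ∈ Icc a b, HasDerivAt (fun t ↦ C / α * (t ^ α - a ^ α)) (C * t ^ (α - 1)) t := by
    intro t ht
    refine (((Real.hasDerivAt_rpow_const (.inl (ha.trans_le ht.1).ne')).sub_const _).const_mul
      (C / α)).congr_deriv ?_
    field_simp
  have hgrowth : ‖g b - g a‖ ≤ C / α * (b ^ α - a ^ α) :=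
    image_norm_le_of_norm_deriv_right_le_deriv_boundary'
      (fun t ht ↦ ((hg t ht).sub_const (g a)).continuousAt.continuousWithinAt)
      (fun t ht ↦ ((hg t (Ico_subset_Icc_self ht)).sub_const (g a)).hasDerivWithinAt)
      (by simp) (fun t ht ↦ (hprim t ht).continuousAt.continuousWithinAt)
      (fun t ht ↦ (hprim t (Ico_subset_Icc_self ht)).hasDerivWithinAt)
      (fun t ht ↦ hbound t (Ico_subset_Icc_self ht)) (right_mem_Icc.2 hab)
  refine hgrowth.trans ?_
  gcongr
  have hsubadd := Real.rpow_add_le_add_rpow (sub_nonneg.2 hab) ha.le hα₀.le hα₁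
  rw [sub_add_cancel] at hsubadd
  linarith

variable {F : Type*} [NormedAddCommGroup F] [NormedSpace ℂ F] {f f' : ℂ → F} {I : Set ℝ}

lemma norm_add_mul_I_sub_le_of_norm_deriv_le {C α : ℝ} (hα₀ : 0 < α) (hα₁ : α ≤ 1) (hC : 0 ≤ C)
    (hf : ∀ z ∈ I ×ℂ Ioi 0, HasDerivAt f (f' z) z)
    (hbound : ∀ z ∈ I ×ℂ Ioi 0, ‖f' z‖ ≤ C * z.im ^ (α - 1)) {z : ℂ} (hz : z ∈ I ×ℂ Ioi 0) {d : ℝ}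
    (hd : 0 ≤ d) : ‖f (z + d * Complex.I) - f z‖ ≤ C / α * d ^ α := by
  have hmem : ∀ t ∈ Icc z.im (z.im + d), (z.re + t * Complex.I : ℂ) ∈ I ×ℂ Ioi 0 := fun t ht ↦ by
    simpa [Complex.mem_reProdIm] using ⟨hz.1, hz.2.trans_le ht.1⟩
  have hline : ∀ t ∈ Icc z.im (z.im + d), HasDerivAt (fun t : ℝ ↦ f (z.re + t * Complex.I))
      (Complex.I • f' (z.re + t * Complex.I)) t := fun t ht ↦ by
    have hinner : HasDerivAt (fun t : ℝ ↦ (z.re + t * Complex.I : ℂ)) Complex.I t := by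
      simpa using ((Complex.ofRealCLM.hasDerivAt (x := t)).mul_const Complex.I).const_add (z.re : ℂ)
    exact (hf _ (hmem t ht)).scomp t hinner
  have hvert := norm_image_sub_le_of_norm_deriv_le_rpow hα₀ hα₁ hC hz.2
    (le_add_of_nonneg_right hd) hline fun t ht ↦ by
      simpa [norm_smul] using hbound _ (hmem t ht)
  have htop : z + d * Complex.I = z.re + (z.im + d : ℝ) * Complex.I := by
    conv_lhs => rw [← Complex.re_add_im z]
    push_cast
    ring
  simpa only [htop, Complex.re_add_im, add_sub_cancel_left] using hvert

lemma holderOnWith_of_norm_deriv_le_im_rpow {C α : ℝ≥0} (hα₀ : 0 < α) (hα₁ : α ≤ 1)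
    (hI : Convex ℝ I) (hf : ∀ z ∈ I ×ℂ Ioi 0, HasDerivAt f (f' z) z)
    (hbound : ∀ z ∈ I ×ℂ Ioi 0, ‖f' z‖ ≤ C * z.im ^ (α - 1 : ℝ)) :
    HolderOnWith (C * (2 / α + 1)) α f (I ×ℂ Ioi 0) := by
  refine holderOnWith_of_dist_le fun z hz w hw ↦ ?_
  rw [dist_eq_norm, dist_eq_norm]
  rcases eq_or_ne z w with rfl | hne
  · simp [hα₀.ne']
  set d := ‖z - w‖
  have hd : 0 < d := norm_pos_iff.2 (sub_ne_zero.2 hne)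
  have hvert : ∀ u ∈ I ×ℂ Ioi 0, ‖f (u + d * Complex.I) - f u‖ ≤ C / α * d ^ (α : ℝ) :=
    fun u hu ↦ norm_add_mul_I_sub_le_of_norm_deriv_le hα₀ hα₁ C.2 hf hbound hu hd.le
  have hlift : ∀ u ∈ I ×ℂ Ioi 0, u + d * Complex.I ∈ I ×ℂ Ici d := fun u hu ↦ by
    simpa [Complex.mem_reProdIm] using ⟨hu.1, hu.2.le⟩
  have hhigh : I ×ℂ Ici d ⊆ I ×ℂ Ioi 0 := fun u hu ↦ ⟨hu.1, hd.trans_le hu.2⟩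
  have hhoriz : ‖f (z + d * Complex.I) - f (w + d * Complex.I)‖ ≤ C * d ^ (α : ℝ) := by
    calc ‖f (z + d * Complex.I) - f (w + d * Complex.I)‖
        ≤ C * d ^ (α - 1 : ℝ) * ‖z + d * Complex.I - (w + d * Complex.I)‖ := by
          refine Convex.norm_image_sub_le_of_norm_hasDerivWithin_le
            (fun u hu ↦ (hf u (hhigh hu)).hasDerivWithinAt) (fun u hu ↦ ?_)
            ((hI.linear_preimage Complex.reLm).inter (convex_halfSpace_im_ge d))
            (hlift w hw) (hlift z hz)
          refine (hbound u (hhigh hu)).trans (mul_le_mul_of_nonneg_left ?_ C.2)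
          exact Real.rpow_le_rpow_of_nonpos hd hu.2 (sub_nonpos.2 hα₁)
      _ = C * d ^ (α : ℝ) := by
          rw [add_sub_add_right_eq_sub, mul_assoc, ← Real.rpow_add_one hd.ne', sub_add_cancel]
  calc ‖f z - f w‖
      = ‖(f (z + d * Complex.I) - f (w + d * Complex.I)) - (f (z + d * Complex.I) - f z)
          + (f (w + d * Complex.I) - f w)‖ := by congr 1; abel
    _ ≤ C * d ^ (α : ℝ) + C / α * d ^ (α : ℝ) + C / α * d ^ (α : ℝ) :=
        norm_add_le_of_le (norm_sub_le_of_le hhoriz (hvert z hz)) (hvert w hw)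
    _ = ↑(C * (2 / α + 1)) * d ^ (α : ℝ) := by push_cast; ring

end HardyLittlewood

section Kernel

lemma integrable_abs_rpow_div_sq_add_one {α : ℝ} (hα₀ : 0 ≤ α) (hα₁ : α < 1) :
    Integrable fun t : ℝ ↦ |t| ^ α / (t ^ 2 + 1) := by
  have hmajorant : Integrable fun t : ℝ ↦ (1 + ‖t‖ ^ 2) ^ (-(2 - α) / 2) :=
    integrable_rpow_neg_one_add_norm_sq (by simp only [Module.finrank_self, Nat.cast_one]; linarith)
  refine hmajorant.mono' (Measurable.aestronglyMeasurable (by fun_prop)) (.of_forall fun t ↦ ?_)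
  have hpos : 0 < 1 + t ^ 2 := by positivity
  have hnum : |t| ^ α ≤ (1 + t ^ 2) ^ (α / 2) := by
    calc |t| ^ α = (t ^ 2) ^ (α / 2) := by
          rw [← sq_abs, ← Real.rpow_natCast_mul (abs_nonneg t)]
          congr 1
          push_cast
          ring
      _ ≤ (1 + t ^ 2) ^ (α / 2) := by gcongr; linarith
  calc ‖|t| ^ α / (t ^ 2 + 1)‖ = |t| ^ α / (1 + t ^ 2) := by
        rw [Real.norm_of_nonneg (by positivity), add_comm]
    _ ≤ (1 + t ^ 2) ^ (α / 2) / (1 + t ^ 2) := by gcongr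
    _ = (1 + ‖t‖ ^ 2) ^ (-(2 - α) / 2) := by
        rw [← Real.rpow_sub_one hpos.ne', Real.norm_eq_abs, sq_abs]
        congr 1
        ring

variable {α y : ℝ} (x : ℝ)

lemma abs_sub_rpow_div_sq_add_sq_eq (hy : 0 < y) (t : ℝ) :
    |t - x| ^ α / ((t - x) ^ 2 + y ^ 2) =
      y ^ (α - 2) * (|(t - x) / y| ^ α / (((t - x) / y) ^ 2 + 1)) := by
  rw [abs_div, abs_of_pos hy, Real.div_rpow (abs_nonneg _) hy.le, Real.rpow_sub hy, Real.rpow_two]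
  field_simp

lemma integrable_abs_sub_rpow_div_sq_add_sq (hα₀ : 0 ≤ α) (hα₁ : α < 1) (hy : 0 < y) :
    Integrable fun t : ℝ ↦ |t - x| ^ α / ((t - x) ^ 2 + y ^ 2) := by
  simp only [abs_sub_rpow_div_sq_add_sq_eq x hy]
  exact (((integrable_abs_rpow_div_sq_add_one hα₀ hα₁).comp_div hy.ne').comp_sub_right
    x).const_mul _

lemma integral_abs_sub_rpow_div_sq_add_sq (hy : 0 < y) :
    ∫ t : ℝ, |t - x| ^ α / ((t - x) ^ 2 + y ^ 2) =
      (∫ t : ℝ, |t| ^ α / (t ^ 2 + 1)) * y ^ (α - 1) := by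
  simp only [abs_sub_rpow_div_sq_add_sq_eq x hy]
  rw [integral_const_mul,
    integral_sub_right_eq_self (fun t : ℝ ↦ |t / y| ^ α / ((t / y) ^ 2 + 1)) x,
    Measure.integral_comp_div (fun t : ℝ ↦ |t| ^ α / (t ^ 2 + 1)) y, abs_of_pos hy, smul_eq_mul,
    ← mul_assoc, ← Real.rpow_add_one hy.ne', mul_comm]
  congr 2
  ring

lemma norm_inv_sub_sq (t : ℝ) (z : ℂ) :
    ‖(((t : ℂ) - z) ^ 2)⁻¹‖ = ((t - z.re) ^ 2 + z.im ^ 2)⁻¹ := by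
  rw [norm_inv, norm_pow, Complex.sq_norm, Complex.normSq_apply, Complex.sub_re, Complex.sub_im,
    Complex.ofReal_re, Complex.ofReal_im]
  ring

lemma abs_im_le_norm_ofReal_sub (t : ℝ) (z : ℂ) : |z.im| ≤ ‖(t : ℂ) - z‖ := by
  simpa using Complex.abs_im_le_norm ((t : ℂ) - z)

lemma sub_re_le_norm_ofReal_sub (t : ℝ) (z : ℂ) : t - z.re ≤ ‖(t : ℂ) - z‖ := by
  simpa using Complex.re_le_norm ((t : ℂ) - z)

lemma ofReal_sub_ne_zero_of_im_ne_zero {z : ℂ} (hz : z.im ≠ 0) (t : ℝ) : (t : ℂ) - z ≠ 0 :=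
  norm_pos_iff.1 ((abs_pos.2 hz).trans_le (abs_im_le_norm_ofReal_sub t z))

lemma continuous_inv_ofReal_sub_sq {z : ℂ} (hz : z.im ≠ 0) :
    Continuous fun t : ℝ ↦ (((t : ℂ) - z) ^ 2)⁻¹ :=
  Continuous.inv₀ (by fun_prop) fun t ↦ pow_ne_zero 2 (ofReal_sub_ne_zero_of_im_ne_zero hz t)

lemma integrable_inv_ofReal_sub_sq {z : ℂ} (hz : 0 < z.im) :
    Integrable fun t : ℝ ↦ (((t : ℂ) - z) ^ 2)⁻¹ := by
  refine (integrable_abs_sub_rpow_div_sq_add_sq z.re le_rfl zero_lt_one hz).mono'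
    (continuous_inv_ofReal_sub_sq hz.ne').aestronglyMeasurable (.of_forall fun t ↦ ?_)
  rw [norm_inv_sub_sq, Real.rpow_zero, one_div]

lemma setIntegral_Iic_inv_ofReal_sub_sq (b : ℝ) {z : ℂ} (hz : 0 < z.im) :
    ∫ t : ℝ in Iic b, (((t : ℂ) - z) ^ 2)⁻¹ = -((b : ℂ) - z)⁻¹ := by
  have hprim : ∀ t : ℝ, HasDerivAt (fun t : ℝ ↦ -((t : ℂ) - z)⁻¹) (((t : ℂ) - z) ^ 2)⁻¹ t :=
    fun t ↦ by
      refine ((((hasDerivAt_id (t : ℂ)).sub_const z).inv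
        (ofReal_sub_ne_zero_of_im_ne_zero hz.ne' t)).neg.comp_ofReal).congr_deriv ?_
      simp [neg_div]
  have hlim : Tendsto (fun t : ℝ ↦ -((t : ℂ) - z)⁻¹) atBot (𝓝 0) := by
    have hsub : Tendsto (fun t : ℝ ↦ (t : ℂ) - z) atBot (Bornology.cobounded ℂ) :=
      (tendsto_sub_const_cobounded z).comp (RCLike.tendsto_ofReal_atBot_cobounded ℂ)
    simpa using (tendsto_inv₀_cobounded.comp hsub).neg
  simpa using integral_Iic_of_hasDerivAt_of_tendsto (hprim b).continuousAt.continuousWithinAt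
    (fun t _ ↦ hprim t) (integrable_inv_ofReal_sub_sq hz).integrableOn hlim

end Kernel

section CauchyIntegral

variable {F : Type*} [NormedAddCommGroup F] [NormedSpace ℂ F] {ψ : ℝ → F} {b : ℝ} {M α : ℝ≥0}
  {z : ℂ}

lemma norm_inv_sq_smul_sub_le_of_holderOnWith (hψ : HolderOnWith M α ψ (Iic b)) (hzb : z.re ≤ b)
    {t : ℝ} (ht : t ≤ b) : ‖(((t : ℂ) - z) ^ 2)⁻¹ • (ψ t - ψ z.re)‖ ≤
      M * (|t - z.re| ^ (α : ℝ) / ((t - z.re) ^ 2 + z.im ^ 2)) := by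
  rw [norm_smul, norm_inv_sub_sq, ← mul_div_assoc, div_eq_inv_mul]
  gcongr
  simpa [dist_eq_norm] using hψ.dist_le ht hzb

lemma norm_setIntegral_Iic_inv_sq_smul_le_of_holderOnWith [CompleteSpace F] (hα₀ : 0 < α)
    (hα₁ : α < 1) (hψ : HolderOnWith M α ψ (Iic b)) (hz : 0 < z.im) (hzb : z.re ≤ b) :
    ‖∫ t : ℝ in Iic b, (((t : ℂ) - z) ^ 2)⁻¹ • ψ t‖ ≤
      M * ((∫ t : ℝ, |t| ^ (α : ℝ) / (t ^ 2 + 1)) * z.im ^ (α - 1 : ℝ)) +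
        ‖(b : ℂ) - z‖⁻¹ * ‖ψ z.re‖ := by
  set κ : ℝ → ℂ := fun t ↦ (((t : ℂ) - z) ^ 2)⁻¹
  have hmajorant : Integrable fun t : ℝ ↦
      M * (|t - z.re| ^ (α : ℝ) / ((t - z.re) ^ 2 + z.im ^ 2)) :=
    (integrable_abs_sub_rpow_div_sq_add_sq z.re α.coe_nonneg hα₁ hz).const_mul _
  have hosc_le : ∀ᵐ t ∂volume.restrict (Iic b), ‖κ t • (ψ t - ψ z.re)‖ ≤
      M * (|t - z.re| ^ (α : ℝ) / ((t - z.re) ^ 2 + z.im ^ 2)) :=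
    (ae_restrict_mem measurableSet_Iic).mono fun t ht ↦
      norm_inv_sq_smul_sub_le_of_holderOnWith hψ hzb ht
  have hosc : IntegrableOn (fun t ↦ κ t • (ψ t - ψ z.re)) (Iic b) :=
    hmajorant.integrableOn.mono' (ContinuousOn.aestronglyMeasurable
      ((continuous_inv_ofReal_sub_sq hz.ne').continuousOn.smul
        ((hψ.continuousOn hα₀).sub continuousOn_const)) measurableSet_Iic) hosc_le
  have hconst : IntegrableOn (fun t ↦ κ t • ψ z.re) (Iic b) :=
    ((integrable_inv_ofReal_sub_sq hz).smul_const _).integrableOn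
  have hosc_bound : ‖∫ t in Iic b, κ t • (ψ t - ψ z.re)‖ ≤
      M * ((∫ t : ℝ, |t| ^ (α : ℝ) / (t ^ 2 + 1)) * z.im ^ (α - 1 : ℝ)) := by
    refine (norm_integral_le_of_norm_le hmajorant.integrableOn hosc_le).trans ?_
    rw [← integral_abs_sub_rpow_div_sq_add_sq z.re hz, ← integral_const_mul]
    exact setIntegral_le_integral hmajorant (.of_forall fun t ↦ by
      simp only [Pi.zero_apply]; positivity)
  calc ‖∫ t in Iic b, κ t • ψ t‖
      = ‖(∫ t in Iic b, κ t • (ψ t - ψ z.re)) + ∫ t in Iic b, κ t • ψ z.re‖ := by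
        rw [← integral_add hosc hconst]
        simp only [← smul_add, sub_add_cancel]
    _ ≤ _ := by
        refine norm_add_le_of_le hosc_bound (le_of_eq ?_)
        rw [integral_smul_const, setIntegral_Iic_inv_ofReal_sub_sq b hz, norm_smul, norm_neg,
          norm_inv]

end CauchyIntegral

section ResolventIntegral

variable {X F : Type*} [MeasurableSpace X] [NormedAddCommGroup F] [NormedSpace ℂ F]

/-- The integral `∫ h(k) / (λ(k) - z) dμ(k)`, i.e. the resolvent at `z` of multiplication by `λ`
applied to `h` and integrated, as a function of the spectral parameter `z`. The quotient is written
as scalar multiplication by an inverse so that `h` may take values in a vector space. -/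
noncomputable def resolventIntegral (μ : Measure X) (lam : X → ℝ) (h : X → F) (z : ℂ) : F :=
  ∫ k, ((lam k : ℂ) - z)⁻¹ • h k ∂μ

variable {μ : Measure X} {lam : X → ℝ} {h : X → F} {z : ℂ}

lemma hasDerivAt_inv_ofReal_sub (t : ℝ) (hz : z.im ≠ 0) :
    HasDerivAt (fun w : ℂ ↦ ((t : ℂ) - w)⁻¹) (((t : ℂ) - z) ^ 2)⁻¹ z := by
  refine (((hasDerivAt_id z).const_sub (t : ℂ)).inv
    (ofReal_sub_ne_zero_of_im_ne_zero hz t)).congr_deriv ?_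
  simp only [neg_neg, one_div, id]

lemma abs_im_div_two_lt_abs_im_of_mem_ball {w : ℂ} (hw : w ∈ Metric.ball z (|z.im| / 2)) :
    |z.im| / 2 < |w.im| := by
  have hclose : |z.im| - |w.im| < |z.im| / 2 := by
    calc |z.im| - |w.im| ≤ |(z - w).im| := by simpa using abs_sub_abs_le_abs_sub z.im w.im
      _ ≤ ‖z - w‖ := Complex.abs_im_le_norm _
      _ < |z.im| / 2 := by rwa [← dist_eq_norm, dist_comm]
  linarith

lemma hasDerivAt_resolventIntegral (hlam : AEMeasurable lam μ) (hh : Integrable h μ)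
    (hz : z.im ≠ 0) :
    Integrable (fun k ↦ (((lam k : ℂ) - z) ^ 2)⁻¹ • h k) μ ∧
      HasDerivAt (resolventIntegral μ lam h) (∫ k, (((lam k : ℂ) - z) ^ 2)⁻¹ • h k ∂μ) z := by
  have hz' : 0 < |z.im| := abs_pos.2 hz
  have hmeas (w : ℂ) : AEStronglyMeasurable (fun k ↦ ((lam k : ℂ) - w)⁻¹ • h k) μ :=
    AEStronglyMeasurable.smul (AEMeasurable.aestronglyMeasurable (by fun_prop))
      hh.aestronglyMeasurable
  have hmeas_sq : AEStronglyMeasurable (fun k ↦ (((lam k : ℂ) - z) ^ 2)⁻¹ • h k) μ :=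
    AEStronglyMeasurable.smul (AEMeasurable.aestronglyMeasurable (by fun_prop))
      hh.aestronglyMeasurable
  refine hasDerivAt_integral_of_dominated_loc_of_deriv_le
    (F' := fun w k ↦ (((lam k : ℂ) - w) ^ 2)⁻¹ • h k)
    (bound := fun k ↦ ((|z.im| / 2) ^ 2)⁻¹ * ‖h k‖)
    (Metric.ball_mem_nhds z (half_pos hz')) (.of_forall hmeas) ?_ hmeas_sq
    (.of_forall fun k w hw ↦ ?_) (hh.norm.const_mul _) (.of_forall fun k w hw ↦ ?_)
  · refine (hh.norm.const_mul |z.im|⁻¹).mono' (hmeas z) (.of_forall fun k ↦ ?_)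
    rw [norm_smul, norm_inv]
    gcongr
    exact abs_im_le_norm_ofReal_sub _ _
  · rw [norm_smul, norm_inv, norm_pow]
    gcongr
    exact (abs_im_div_two_lt_abs_im_of_mem_ball hw).le.trans (abs_im_le_norm_ofReal_sub _ _)
  · exact (hasDerivAt_inv_ofReal_sub _ (abs_pos.1 <|
      (half_pos hz').trans (abs_im_div_two_lt_abs_im_of_mem_ball hw))).smul_const _

lemma inv_le_rpow_neg_mul_rpow_sub_one {α d y w : ℝ} (hα₀ : 0 ≤ α) (hα₁ : α ≤ 1) (hd : 0 < d)
    (hy : 0 < y) (hdw : d ≤ w) (hyw : y ≤ w) : w⁻¹ ≤ d ^ (-α) * y ^ (α - 1) := by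
  calc w⁻¹ = w ^ (-α) * w ^ (α - 1) := by
        rw [← Real.rpow_add (hd.trans_le hdw), ← Real.rpow_neg_one]
        congr 1
        ring
    _ ≤ d ^ (-α) * y ^ (α - 1) :=
        mul_le_mul (Real.rpow_le_rpow_of_nonpos hd hdw (neg_nonpos.2 hα₀))
          (Real.rpow_le_rpow_of_nonpos hy hyw (sub_nonpos.2 hα₁))
          (Real.rpow_nonneg (hd.le.trans hdw) _) (Real.rpow_nonneg hd.le _)

lemma norm_integral_inv_sq_smul_le_of_le_sub_re {α d : ℝ} (hα₀ : 0 ≤ α) (hα₁ : α ≤ 1) (hd : 0 < d)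
    (hlam : ∀ᵐ k ∂μ, d ≤ lam k - z.re) (hh : Integrable h μ) (hz : 0 < z.im) :
    ‖∫ k, (((lam k : ℂ) - z) ^ 2)⁻¹ • h k ∂μ‖ ≤
      d⁻¹ * (d ^ (-α) * z.im ^ (α - 1)) * ∫ k, ‖h k‖ ∂μ := by
  rw [← integral_const_mul]
  refine norm_integral_le_of_norm_le (hh.norm.const_mul _) (hlam.mono fun k hk ↦ ?_)
  have hdw : d ≤ ‖(lam k : ℂ) - z‖ := hk.trans (sub_re_le_norm_ofReal_sub _ _)
  have hyw : z.im ≤ ‖(lam k : ℂ) - z‖ := (le_abs_self _).trans (abs_im_le_norm_ofReal_sub _ _)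
  rw [norm_smul, norm_inv, norm_pow, sq, mul_inv]
  gcongr
  exact inv_le_rpow_neg_mul_rpow_sub_one hα₀ hα₁ hd hz hdw hyw

end ResolventIntegral

section Threshold

variable {F : Type*} [NormedAddCommGroup F] {φ : ℝ → F} {E b : ℝ} {M α : ℝ≥0}

lemma holderOnWith_comp_max (hEb : E ≤ b) (hφ : HolderOnWith M α φ (Icc E b)) :
    HolderOnWith M α (fun t ↦ φ (max E t)) (Iic b) := by
  have hmax : HolderOnWith 1 1 (max E) (Iic b) :=
    (LipschitzWith.id.const_max E).holderWith.holderOnWith _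
  simpa using! hφ.comp hmax fun t ht ↦ ⟨le_max_left _ _, max_le hEb ht⟩

lemma norm_comp_max_le (hEb : E ≤ b) (hφE : φ E = 0) (hφ : HolderOnWith M α φ (Icc E b)) {t : ℝ}
    (ht : t ≤ b) : ‖φ (max E t)‖ ≤ M * (b - E) ^ (α : ℝ) := by
  have hmax : dist (max E t) E ≤ b - E := by
    rw [Real.dist_eq, abs_of_nonneg (sub_nonneg.2 (le_max_left _ _))]
    exact sub_le_sub_right (max_le hEb ht) E
  simpa [hφE] using
    hφ.dist_le_of_le ⟨le_max_left _ _, max_le hEb ht⟩ (left_mem_Icc.2 hEb) hmax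

variable [NormedSpace ℂ F]

lemma setIntegral_Ioc_smul_eq_setIntegral_Iic_comp_max (hφE : φ E = 0) (g : ℝ → ℂ) :
    ∫ t in Ioc E b, g t • φ t = ∫ t in Iic b, g t • φ (max E t) := by
  have hzero : ∀ t ∈ Iic b \ Ioc E b, g t • φ (max E t) = 0 := fun t ht ↦ by
    rw [max_eq_left (not_lt.1 fun hlt ↦ ht.2 ⟨hlt, ht.1⟩), hφE, smul_zero]
  rw [setIntegral_eq_of_subset_of_forall_sdiff_eq_zero measurableSet_Iic Ioc_subset_Iic_self hzero]
  exact setIntegral_congr_fun measurableSet_Ioc fun t ht ↦ by rw [max_eq_right ht.1.le]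

lemma setIntegral_comp_smul_eq_setIntegral_image {lam lam' : ℝ → ℝ} {s : Set ℝ} {h : ℝ → F}
    (hs : MeasurableSet s) (hderiv : ∀ k ∈ s, HasDerivWithinAt lam (lam' k) s k)
    (hinj : InjOn lam s) (hφ : ∀ k ∈ s, h k = |lam' k| • φ (lam k)) (g : ℝ → ℂ) :
    ∫ k in s, g (lam k) • h k = ∫ t in lam '' s, g t • φ t := by
  rw [integral_image_eq_integral_abs_deriv_smul hs hderiv hinj]
  exact setIntegral_congr_fun hs fun k hk ↦ by rw [hφ k hk, smul_comm]

variable [CompleteSpace F]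

lemma exists_norm_setIntegral_Ioc_inv_sq_smul_le {c : ℝ} (hα₀ : 0 < α) (hα₁ : α < 1) (hEb : E ≤ b)
    (hcb : c < b) (hφE : φ E = 0) (hφ : HolderOnWith M α φ (Icc E b)) :
    ∃ C : ℝ, ∀ z ∈ Iic c ×ℂ Ioi 0,
      ‖∫ t : ℝ in Ioc E b, (((t : ℂ) - z) ^ 2)⁻¹ • φ t‖ ≤ C * z.im ^ (α - 1 : ℝ) := by
  refine ⟨M * (∫ t : ℝ, |t| ^ (α : ℝ) / (t ^ 2 + 1)) +
    (b - c) ^ (-α : ℝ) * (M * (b - E) ^ (α : ℝ)), fun z ⟨hzc, hz⟩ ↦ ?_⟩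
  have hzb : z.re ≤ b := hzc.trans hcb.le
  have hdist : ‖(b : ℂ) - z‖⁻¹ ≤ (b - c) ^ (-α : ℝ) * z.im ^ (α - 1 : ℝ) :=
    inv_le_rpow_neg_mul_rpow_sub_one α.coe_nonneg hα₁.le (sub_pos.2 hcb) hz
      ((sub_le_sub_left hzc b).trans (sub_re_le_norm_ofReal_sub b z))
      ((le_abs_self _).trans (abs_im_le_norm_ofReal_sub b z))
  rw [setIntegral_Ioc_smul_eq_setIntegral_Iic_comp_max hφE]
  calc ‖∫ t : ℝ in Iic b, (((t : ℂ) - z) ^ 2)⁻¹ • φ (max E t)‖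
      ≤ M * ((∫ t : ℝ, |t| ^ (α : ℝ) / (t ^ 2 + 1)) * z.im ^ (α - 1 : ℝ)) +
          ‖(b : ℂ) - z‖⁻¹ * ‖φ (max E z.re)‖ :=
        norm_setIntegral_Iic_inv_sq_smul_le_of_holderOnWith hα₀ hα₁
          (holderOnWith_comp_max hEb hφ) hz hzb
    _ ≤ M * ((∫ t : ℝ, |t| ^ (α : ℝ) / (t ^ 2 + 1)) * z.im ^ (α - 1 : ℝ)) +
          (b - c) ^ (-α : ℝ) * z.im ^ (α - 1 : ℝ) * (M * (b - E) ^ (α : ℝ)) := by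
        have hz' : 0 < z.im := hz
        gcongr
        exact norm_comp_max_le hEb hφE hφ hzb
    _ = _ := by ring

variable {c : ℝ} {lam lam' : ℝ → ℝ} {h : ℝ → F}

lemma exists_norm_deriv_resolventIntegral_le (hα₀ : 0 < α) (hα₁ : α < 1) (hEb : E ≤ b)
    (hcb : c < b) (hlam : Measurable lam)
    (hderiv : ∀ k ∈ lam ⁻¹' Iic b, HasDerivWithinAt lam (lam' k) (lam ⁻¹' Iic b) k)
    (hbij : BijOn lam (lam ⁻¹' Iic b) (Ioc E b)) (hh : Integrable h) (hφE : φ E = 0)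
    (hφ : HolderOnWith M α φ (Icc E b)) (hhφ : ∀ k ∈ lam ⁻¹' Iic b, h k = |lam' k| • φ (lam k)) :
    ∃ C : ℝ≥0, ∀ z ∈ Iic c ×ℂ Ioi 0,
      ‖∫ k, (((lam k : ℂ) - z) ^ 2)⁻¹ • h k‖ ≤ C * z.im ^ (α - 1 : ℝ) := by
  set s := lam ⁻¹' Iic b
  have hs : MeasurableSet s := hlam measurableSet_Iic
  obtain ⟨A, hA⟩ := exists_norm_setIntegral_Ioc_inv_sq_smul_le hα₀ hα₁ hEb hcb hφE hφ
  set B := (b - c)⁻¹ * (b - c) ^ (-α : ℝ) * ∫ k in sᶜ, ‖h k‖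
  refine ⟨(A + B).toNNReal, fun z hz ↦ ?_⟩
  have hnear : ‖∫ k in s, (((lam k : ℂ) - z) ^ 2)⁻¹ • h k‖ ≤ A * z.im ^ (α - 1 : ℝ) := by
    rw [setIntegral_comp_smul_eq_setIntegral_image hs hderiv hbij.injOn hhφ
      (fun t ↦ (((t : ℂ) - z) ^ 2)⁻¹), hbij.image_eq]
    exact hA z hz
  have hfar : ‖∫ k in sᶜ, (((lam k : ℂ) - z) ^ 2)⁻¹ • h k‖ ≤ B * z.im ^ (α - 1 : ℝ) := by
    refine (norm_integral_inv_sq_smul_le_of_le_sub_re α.coe_nonneg hα₁.le (sub_pos.2 hcb)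
      ((ae_restrict_mem hs.compl).mono fun k hk ↦ ?_) hh.integrableOn hz.2).trans_eq (by ring)
    have hbk : b < lam k := not_le.1 hk
    exact sub_le_sub hbk.le hz.1
  calc ‖∫ k, (((lam k : ℂ) - z) ^ 2)⁻¹ • h k‖
      = ‖(∫ k in s, (((lam k : ℂ) - z) ^ 2)⁻¹ • h k) +
          ∫ k in sᶜ, (((lam k : ℂ) - z) ^ 2)⁻¹ • h k‖ := by
        rw [integral_add_compl hs (hasDerivAt_resolventIntegral hlam.aemeasurable hh hz.2.ne').1]
    _ ≤ A * z.im ^ (α - 1 : ℝ) + B * z.im ^ (α - 1 : ℝ) := norm_add_le_of_le hnear hfar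
    _ = (A + B) * z.im ^ (α - 1 : ℝ) := (add_mul _ _ _).symm
    _ ≤ (A + B).toNNReal * z.im ^ (α - 1 : ℝ) :=
        mul_le_mul_of_nonneg_right (Real.le_coe_toNNReal _) (Real.rpow_nonneg hz.2.le _)

end Threshold

theorem lap_at_threshold_general {F : Type*} [NormedAddCommGroup F] [NormedSpace ℂ F]
    [CompleteSpace F] {E b c M α : ℝ} {lam lam' linv : ℝ → ℝ} {h φ : ℝ → F} (hα : α ∈ Ioo 0 1)
    (hEb : E ≤ b) (hcb : c < b) (hlam : Measurable lam)
    (hderiv : ∀ k ∈ lam ⁻¹' Iic b, HasDerivWithinAt lam (lam' k) (lam ⁻¹' Iic b) k)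
    (hlam' : ∀ k ∈ lam ⁻¹' Iic b, lam' k ≠ 0) (hmaps : MapsTo lam (lam ⁻¹' Iic b) (Ioc E b))
    (hinv : InvOn linv lam (lam ⁻¹' Iic b) (Ioc E b)) (hh : Integrable h) (hφE : φ E = 0)
    (hφeq : ∀ μ ∈ Ioc E b, φ μ = |lam' (linv μ)|⁻¹ • h (linv μ))
    (hφ : ∀ μ ∈ Icc E b, ∀ μ' ∈ Icc E b, ‖φ μ - φ μ'‖ ≤ M * |μ - μ'| ^ α) :
    ∃ rplus : ℂ → F, EqOn rplus (resolventIntegral volume lam h) {z | 0 < z.im} ∧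
      ContinuousOn rplus (Iic c ×ℂ Ici 0) ∧ ∃ C > 0, ∀ z ∈ Iic c ×ℂ Ici 0,
        ∀ z' ∈ Iic c ×ℂ Ici 0, ‖rplus z - rplus z'‖ ≤ C * ‖z - z'‖ ^ α := by
  lift α to ℝ≥0 using hα.1.le
  have hbij : BijOn lam (lam ⁻¹' Iic b) (Ioc E b) :=
    hinv.bijOn hmaps fun μ hμ ↦ (hinv.2 hμ).trans_le hμ.2
  have hhφ : ∀ k ∈ lam ⁻¹' Iic b, h k = |lam' k| • φ (lam k) := fun k hk ↦ by
    rw [hφeq _ (hmaps hk), hinv.1 hk, smul_inv_smul₀ (abs_ne_zero.2 (hlam' k hk))]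
  have hφHolder : HolderOnWith M.toNNReal α φ (Icc E b) :=
    holderOnWith_of_dist_le fun x hx y hy ↦ by
      rw [dist_eq_norm, Real.dist_eq]
      exact (hφ x hx y hy).trans (by gcongr; exact Real.le_coe_toNNReal M)
  obtain ⟨C, hC⟩ :=
    exists_norm_deriv_resolventIntegral_le hα.1 hα.2 hEb hcb hlam hderiv hbij hh hφE hφHolder hhφ
  have hopen := holderOnWith_of_norm_deriv_le_im_rpow hα.1 (le_of_lt hα.2) (convex_Iic c)
    (fun z hz ↦ (hasDerivAt_resolventIntegral hlam.aemeasurable hh (ne_of_gt hz.2)).2) hC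
  obtain ⟨rplus, heq, hHolder⟩ := exists_eqOn_holderOnWith_closure hα.1 hopen
  rw [Complex.closure_reProdIm, closure_Iic, closure_Ioi] at heq hHolder
  exact ⟨rplus, fun z hz ↦ heq fun hmem ↦ hmem.2 ⟨hmem.1.1, hz⟩, hHolder.continuousOn hα.1,
    exists_pos_norm_sub_le_of_holderOnWith hHolder⟩

lemma lt_of_strictAnti_of_tendsto {f : ℝ → ℝ} {a : ℝ} (hf : StrictAnti f)
    (hlim : Tendsto f atTop (𝓝 a)) (k : ℝ) : a < f k :=
  (hf.antitone.le_of_tendsto hlim (k + 1)).trans_lt (hf (lt_add_one k))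

lemma halfDisk_subset_reProdIm (a r : ℝ) :
    {z : ℂ | 0 ≤ z.im ∧ ‖z - (a : ℂ)‖ ≤ r} ⊆ Iic (a + r) ×ℂ Ici 0 := by
  rintro z ⟨him, hdisk⟩
  have hre : z.re - a ≤ ‖z - (a : ℂ)‖ := by simpa using Complex.re_le_norm (z - (a : ℂ))
  exact ⟨by simpa [add_comm] using hre.trans hdisk, him⟩

/-- limiting absorption at the (non-attained) threshold E: if the transported
density `H(μ) = h(λ⁻¹(μ))/|λ'(λ⁻¹(μ))|` extends α-Hölder continuously to [E, E+ε₀] with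
H(E) = 0, then `r(z) = ∫_ℝ h(k)/(λ(k)-z) dk` extends from the open upper half-plane to an
α-Hölder continuous function on `S = {Im z ≥ 0, |z-E| ≤ ε₀/2}`. -/
theorem lap_at_threshold (E ε₀ α : ℝ) (lam lam' : ℝ → ℝ)
    (hderiv : ∀ k, HasDerivAt lam (lam' k) k) (hcont : Continuous lam')
    (hneg : ∀ k, lam' k < 0)
    (hbot : Filter.Tendsto lam Filter.atBot Filter.atTop)
    (htop : Filter.Tendsto lam Filter.atTop (nhds E))
    (linv : ℝ → ℝ) (hlinv : ∀ k, linv (lam k) = k)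
    (hlinv' : ∀ μ ∈ Set.Ioi E, lam (linv μ) = μ)
    (h : ℝ → ℂ) (hh : MeasureTheory.Integrable h)
    (hε₀ : 0 < ε₀) (hα : α ∈ Set.Ioo (0:ℝ) 1)
    (φ : ℝ → ℂ) (hφE : φ E = 0)
    (hφeq : ∀ μ ∈ Set.Ioc E (E + ε₀), φ μ = (|lam' (linv μ)|⁻¹ : ℝ) • h (linv μ))
    (M : ℝ)
    (hφHolder : ∀ μ ∈ Set.Icc E (E + ε₀), ∀ μ' ∈ Set.Icc E (E + ε₀),
      ‖φ μ - φ μ'‖ ≤ M * |μ - μ'| ^ α) :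
    ∃ rplus : ℂ → ℂ,
      (∀ z : ℂ, 0 < z.im → rplus z = ∫ k : ℝ, h k / ((lam k : ℂ) - z)) ∧
      ContinuousOn rplus {z : ℂ | 0 ≤ z.im ∧ ‖z - (E : ℂ)‖ ≤ ε₀ / 2} ∧
      ∃ C > 0, ∀ z ∈ {z : ℂ | 0 ≤ z.im ∧ ‖z - (E : ℂ)‖ ≤ ε₀ / 2},
        ∀ z' ∈ {z : ℂ | 0 ≤ z.im ∧ ‖z - (E : ℂ)‖ ≤ ε₀ / 2},
          ‖rplus z - rplus z'‖ ≤ C * ‖z - z'‖ ^ α := by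
  have hgt : ∀ k, E < lam k := lt_of_strictAnti_of_tendsto
    (strictAnti_of_deriv_neg fun k ↦ (hderiv k).deriv ▸ hneg k) htop
  obtain ⟨rplus, heq, hcontS, C, hC, hHolder⟩ := lap_at_threshold_general (c := E + ε₀ / 2) hα
    (by linarith) (by linarith)
    (continuous_iff_continuousAt.2 fun k ↦ (hderiv k).continuousAt).measurable
    (fun k _ ↦ (hderiv k).hasDerivWithinAt) (fun k _ ↦ (hneg k).ne) (fun k hk ↦ ⟨hgt k, hk⟩)
    ⟨fun k _ ↦ hlinv k, fun μ hμ ↦ hlinv' μ hμ.1⟩ hh hφE hφeq hφHolder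
  have hS := halfDisk_subset_reProdIm E (ε₀ / 2)
  exact ⟨rplus, fun z hz ↦ by simpa [resolventIntegral, div_eq_inv_mul] using heq hz,
    hcontS.mono hS, C, hC, fun z hz z' hz' ↦ hHolder z (hS hz) z' (hS hz')⟩
end
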